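/- Let f be a C² real function on an open subinterval of (0, ∞) and define u : ℝ⁴ × ℝ³ → ℝ by u(x, t) = ‖t‖ − f(‖x‖), where ‖x‖ = (x₁²+x₂²+x₃²+x₄²)^{1/2} and ‖t‖ = (t₁²+t₂²+t₃²)^{1/2}. Then at every point (x, t) with r := ‖x‖ > 0 in the domain of f and ‖t‖ = f(r) > 0, the horizontal mean curvature of the level hypersurface {u = 0} equals H⁰ = (−4r(2f′(r) + r f″(r)) − 3 f′(r)³/r) / (4r² + f′(r)²)^{3/2} + 8r² / (f(r) · (4r² + f′(r)²)^{1/2}). -/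

import Mathlib

open Set

/-- The horizontal vector fields `ξ₁, ξ₂, ξ₃, ξ₄` of the quaternionic Heisenberg
group, on `ℝ⁷ ≃ ℝ⁴ × ℝ³` with coordinates `(x₁,x₂,x₃,x₄,t₁,t₂,t₃)`. -/
noncomputable def xiVF : Fin 4 → (Fin 7 → ℝ) → (Fin 7 → ℝ)
  | 0 => fun p => ![1, 0, 0, 0, 2 * p 1, 2 * p 2, 2 * p 3]
  | 1 => fun p => ![0, 1, 0, 0, -2 * p 0, -2 * p 3, 2 * p 2]
  | 2 => fun p => ![0, 0, 1, 0, 2 * p 3, -2 * p 0, -2 * p 1]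
  | 3 => fun p => ![0, 0, 0, 1, -2 * p 2, 2 * p 1, -2 * p 0]

/-- The directional derivative `ξᵢ u` of a function `u` along `ξᵢ`. -/
noncomputable def xiD (i : Fin 4) (u : (Fin 7 → ℝ) → ℝ) (p : Fin 7 → ℝ) : ℝ :=
  fderiv ℝ u p (xiVF i p)

/-- The norm of the horizontal gradient, `|∇₀u| = (Σᵢ (ξᵢu)²)^{1/2}`. -/
noncomputable def hGradNorm (u : (Fin 7 → ℝ) → ℝ) (p : Fin 7 → ℝ) : ℝ :=
  Real.sqrt (∑ i : Fin 4, (xiD i u p) ^ 2)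

/-- The horizontal mean curvature `H⁰ = Σᵢ ξᵢ(ξᵢu / |∇₀u|)` of the level
hypersurface of `u`. -/
noncomputable def hMeanCurv (u : (Fin 7 → ℝ) → ℝ) (p : Fin 7 → ℝ) : ℝ :=
  ∑ i : Fin 4, xiD i (fun q => xiD i u q / hGradNorm u q) p

/-- The horizontal radius `‖x‖ = (x₁²+x₂²+x₃²+x₄²)^{1/2}`. -/
noncomputable def nx (p : Fin 7 → ℝ) : ℝ :=
  Real.sqrt (p 0 ^ 2 + p 1 ^ 2 + p 2 ^ 2 + p 3 ^ 2)

/-- The vertical radius `‖t‖ = (t₁²+t₂²+t₃²)^{1/2}`. -/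
noncomputable def nt (p : Fin 7 → ℝ) : ℝ :=
  Real.sqrt (p 4 ^ 2 + p 5 ^ 2 + p 6 ^ 2)

/-!
The curvature is the horizontal divergence of `∇₀u / |∇₀u|`, so it equals
`Δ₀u / |∇₀u| − ⟨∇₀u, ∇₀|∇₀u|⟩ / |∇₀u|²`. With `r = ‖x‖` and `τ = ‖t‖`, the gradients `∇₀r` and
`∇₀τ` are orthogonal, `|∇₀r|² = 1`, `|∇₀τ|² = 4r²`, `Δ₀r = 3 / r` and `Δ₀τ = 8r² / τ`. Hence
`|∇₀u|² = 4r² + f′(r)²` is a function of `r`, and the chain rule gives every term of the formula.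
The five identities reduce, through the square root, to polynomial ones for `r²` and `τ²`, where
`ξᵢξᵢ` is easy to apply because `ξᵢ` is constant along its own integral lines.
-/

open Filter Topology

section Calculus

variable {u v w : (Fin 7 → ℝ) → ℝ} {φ : ℝ → ℝ} {p : Fin 7 → ℝ} {i : Fin 4}

lemma differentiable_xiVF (i : Fin 4) : Differentiable ℝ (xiVF i) := by
  refine differentiable_pi.2 fun j => ?_
  fin_cases i <;> fin_cases j <;> dsimp [xiVF] <;> fun_prop

lemma xiD_congr (h : u =ᶠ[𝓝 p] v) : xiD i u p = xiD i v p := by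
  simp only [xiD, h.fderiv_eq]

lemma xiD_sub (hu : DifferentiableAt ℝ u p) (hv : DifferentiableAt ℝ v p) :
    xiD i (fun q => u q - v q) p = xiD i u p - xiD i v p := by
  simp [xiD, fderiv_fun_sub hu hv]

lemma xiD_sub_eventuallyEq (hu : ∀ᶠ q in 𝓝 p, DifferentiableAt ℝ u q)
    (hv : ∀ᶠ q in 𝓝 p, DifferentiableAt ℝ v q) :
    xiD i (fun q => u q - v q) =ᶠ[𝓝 p] fun q => xiD i u q - xiD i v q := by
  filter_upwards [hu, hv] with q hq hq'
  exact xiD_sub hq hq'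

lemma xiD_mul (hu : DifferentiableAt ℝ u p) (hv : DifferentiableAt ℝ v p) :
    xiD i (fun q => u q * v q) p = u p * xiD i v p + v p * xiD i u p := by
  simp [xiD, fderiv_fun_mul hu hv]

lemma xiD_sum {ι : Type*} {S : Finset ι} {U : ι → (Fin 7 → ℝ) → ℝ}
    (hU : ∀ j ∈ S, DifferentiableAt ℝ (U j) p) :
    xiD i (fun q => ∑ j ∈ S, U j q) p = ∑ j ∈ S, xiD i (U j) p := by
  simp [xiD, fderiv_fun_sum hU]

lemma xiD_comp (hφ : DifferentiableAt ℝ φ (w p)) (hw : DifferentiableAt ℝ w p) :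
    xiD i (fun q => φ (w q)) p = deriv φ (w p) * xiD i w p := by
  have h : HasFDerivAt (fun q => φ (w q)) (deriv φ (w p) • fderiv ℝ w p) p :=
    hφ.hasDerivAt.comp_hasFDerivAt p hw.hasFDerivAt
  simp [xiD, h.fderiv]

lemma xiD_comp_eventuallyEq (hφ : ∀ᶠ s in 𝓝 (w p), DifferentiableAt ℝ φ s)
    (hw : ∀ᶠ q in 𝓝 p, DifferentiableAt ℝ w q) :
    xiD i (fun q => φ (w q)) =ᶠ[𝓝 p] fun q => deriv φ (w q) * xiD i w q := by
  filter_upwards [hw, hw.self_of_nhds.continuousAt.eventually hφ] with q hq hφq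
  exact xiD_comp hφq hq

lemma xiD_div (hu : DifferentiableAt ℝ u p) (hv : DifferentiableAt ℝ v p) (h : v p ≠ 0) :
    xiD i (fun q => u q / v q) p = xiD i u p / v p - u p * xiD i v p / v p ^ 2 := by
  simp only [div_eq_mul_inv]
  rw [xiD_mul hu (hv.fun_inv h), xiD_comp (differentiableAt_inv h) hv, deriv_inv]
  ring

/-- Twice differentiability at `p` along the horizontal fields: `u` is differentiable near `p` and
each `ξᵢu` is differentiable at `p`. This is what the chain rule for `Δ₀u` needs. -/
structure HTwiceDifferentiableAt (u : (Fin 7 → ℝ) → ℝ) (p : Fin 7 → ℝ) : Prop where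
  eventually_differentiableAt : ∀ᶠ q in 𝓝 p, DifferentiableAt ℝ u q
  differentiableAt_xiD : ∀ i, DifferentiableAt ℝ (xiD i u) p

namespace HTwiceDifferentiableAt

lemma of_contDiffAt (hu : ContDiffAt ℝ 2 u p) : HTwiceDifferentiableAt u p where
  eventually_differentiableAt :=
    (hu.eventually (by simp)).mono fun _ hq => hq.differentiableAt two_ne_zero
  differentiableAt_xiD i :=
    ((hu.fderiv_right (m := 1) le_rfl).differentiableAt one_ne_zero).clm_apply
      (differentiable_xiVF i p)

lemma differentiableAt (hu : HTwiceDifferentiableAt u p) : DifferentiableAt ℝ u p :=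
  hu.eventually_differentiableAt.self_of_nhds

lemma sub (hu : HTwiceDifferentiableAt u p) (hv : HTwiceDifferentiableAt v p) :
    HTwiceDifferentiableAt (fun q => u q - v q) p where
  eventually_differentiableAt := by
    filter_upwards [hu.eventually_differentiableAt, hv.eventually_differentiableAt] with q hq hq'
    exact hq.fun_sub hq'
  differentiableAt_xiD i :=
    ((hu.differentiableAt_xiD i).fun_sub (hv.differentiableAt_xiD i)).congr_of_eventuallyEq
      (xiD_sub_eventuallyEq hu.eventually_differentiableAt hv.eventually_differentiableAt)

lemma comp (hw : HTwiceDifferentiableAt w p) (hφ : ∀ᶠ s in 𝓝 (w p), DifferentiableAt ℝ φ s)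
    (hφ' : DifferentiableAt ℝ (deriv φ) (w p)) :
    HTwiceDifferentiableAt (fun q => φ (w q)) p where
  eventually_differentiableAt := by
    filter_upwards [hw.eventually_differentiableAt,
      hw.differentiableAt.continuousAt.eventually hφ] with q hq hφq
    exact hφq.fun_comp' q hq
  differentiableAt_xiD i :=
    ((hφ'.fun_comp' p hw.differentiableAt).fun_mul
      (hw.differentiableAt_xiD i)).congr_of_eventuallyEq
        (xiD_comp_eventuallyEq hφ hw.eventually_differentiableAt)

end HTwiceDifferentiableAt

/-- The inner product `⟨∇₀u, ∇₀v⟩ = Σᵢ ξᵢu ξᵢv` of horizontal gradients, the first-order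
term of the chain rule for `hLaplacian` and of the expansion of `hMeanCurv`. -/
noncomputable def hGradInner (u v : (Fin 7 → ℝ) → ℝ) (p : Fin 7 → ℝ) : ℝ :=
  ∑ i : Fin 4, xiD i u p * xiD i v p

/-- The horizontal Laplacian `Δ₀u = Σᵢ ξᵢ(ξᵢu)`, the second-order term of `hMeanCurv`. -/
noncomputable def hLaplacian (u : (Fin 7 → ℝ) → ℝ) (p : Fin 7 → ℝ) : ℝ :=
  ∑ i : Fin 4, xiD i (xiD i u) p

lemma hGradInner_comm (u v : (Fin 7 → ℝ) → ℝ) (p : Fin 7 → ℝ) :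
    hGradInner u v p = hGradInner v u p := by
  simp only [hGradInner, mul_comm]

lemma hGradInner_congr_right (h : v =ᶠ[𝓝 p] w) : hGradInner u v p = hGradInner u w p := by
  simp only [hGradInner, xiD_congr h]

lemma hGradInner_sub_left (hu : DifferentiableAt ℝ u p) (hv : DifferentiableAt ℝ v p) :
    hGradInner (fun q => u q - v q) w p = hGradInner u w p - hGradInner v w p := by
  simp only [hGradInner, xiD_sub hu hv, sub_mul, Finset.sum_sub_distrib]

lemma hGradInner_comp_left (hφ : DifferentiableAt ℝ φ (w p)) (hw : DifferentiableAt ℝ w p) :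
    hGradInner (fun q => φ (w q)) v p = deriv φ (w p) * hGradInner w v p := by
  simp only [hGradInner, xiD_comp hφ hw, mul_assoc, Finset.mul_sum]

lemma hGradInner_comp_right (hφ : DifferentiableAt ℝ φ (w p)) (hw : DifferentiableAt ℝ w p) :
    hGradInner v (fun q => φ (w q)) p = deriv φ (w p) * hGradInner v w p := by
  rw [hGradInner_comm, hGradInner_comp_left hφ hw, hGradInner_comm]

lemma hLaplacian_sub (hu : HTwiceDifferentiableAt u p) (hv : HTwiceDifferentiableAt v p) :
    hLaplacian (fun q => u q - v q) p = hLaplacian u p - hLaplacian v p := by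
  simp only [hLaplacian, xiD_congr
      (xiD_sub_eventuallyEq hu.eventually_differentiableAt hv.eventually_differentiableAt),
    xiD_sub (hu.differentiableAt_xiD _) (hv.differentiableAt_xiD _), Finset.sum_sub_distrib]

lemma hLaplacian_comp (hw : HTwiceDifferentiableAt w p)
    (hφ : ∀ᶠ s in 𝓝 (w p), DifferentiableAt ℝ φ s) (hφ' : DifferentiableAt ℝ (deriv φ) (w p)) :
    hLaplacian (fun q => φ (w q)) p =
      deriv φ (w p) * hLaplacian w p + deriv (deriv φ) (w p) * hGradInner w w p := by
  simp only [hLaplacian, hGradInner, Finset.mul_sum, ← Finset.sum_add_distrib]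
  refine Finset.sum_congr rfl fun i _ => ?_
  rw [xiD_congr (xiD_comp_eventuallyEq hφ hw.eventually_differentiableAt),
    xiD_mul (hφ'.fun_comp' p hw.differentiableAt) (hw.differentiableAt_xiD i),
    xiD_comp hφ' hw.differentiableAt]
  ring

lemma hGradNorm_eq_sqrt_hGradInner (u : (Fin 7 → ℝ) → ℝ) (p : Fin 7 → ℝ) :
    hGradNorm u p = √(hGradInner u u p) := by
  simp only [hGradNorm, hGradInner, sq]

lemma differentiableAt_hGradNorm (hu : ∀ i, DifferentiableAt ℝ (xiD i u) p)
    (h : hGradNorm u p ≠ 0) : DifferentiableAt ℝ (hGradNorm u) p :=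
  (DifferentiableAt.fun_sum fun i _ => (hu i).fun_pow 2).sqrt
    fun h0 => h (Real.sqrt_eq_zero_of_nonpos h0.le)

lemma hMeanCurv_eq_hLaplacian_sub (hu : ∀ i, DifferentiableAt ℝ (xiD i u) p)
    (h : hGradNorm u p ≠ 0) :
    hMeanCurv u p = hLaplacian u p / hGradNorm u p -
      hGradInner u (hGradNorm u) p / hGradNorm u p ^ 2 := by
  simp only [hMeanCurv, hLaplacian, hGradInner, Finset.sum_div, ← Finset.sum_sub_distrib,
    xiD_div (hu _) (differentiableAt_hGradNorm hu h) h]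

end Calculus

section Sqrt

variable {u v w : (Fin 7 → ℝ) → ℝ} {p : Fin 7 → ℝ}

lemma deriv_sqrt_of_pos {s : ℝ} (hs : 0 < s) : deriv (√·) s = 1 / (2 * √s) :=
  (Real.hasDerivAt_sqrt hs.ne').deriv

lemma hasDerivAt_deriv_sqrt {s : ℝ} (hs : 0 < s) :
    HasDerivAt (deriv (√·)) (-1 / (4 * √s ^ 3)) s := by
  have h : deriv (√·) =ᶠ[𝓝 s] fun a => (2 * √a)⁻¹ := by
    filter_upwards [lt_mem_nhds hs] with a ha
    rw [deriv_sqrt_of_pos ha, one_div]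
  refine ((((Real.hasDerivAt_sqrt hs.ne').const_mul 2).fun_inv
    (by positivity)).congr_of_eventuallyEq h).congr_deriv ?_
  field_simp
  norm_num

lemma eventually_differentiableAt_sqrt {s : ℝ} (hs : 0 < s) :
    ∀ᶠ a in 𝓝 s, DifferentiableAt ℝ (√·) a :=
  (lt_mem_nhds hs).mono fun _ ha => (Real.hasDerivAt_sqrt ha.ne').differentiableAt

lemma HTwiceDifferentiableAt.sqrt (hw : HTwiceDifferentiableAt w p) (h : 0 < w p) :
    HTwiceDifferentiableAt (fun q => √(w q)) p :=
  hw.comp (eventually_differentiableAt_sqrt h) (hasDerivAt_deriv_sqrt h).differentiableAt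

lemma hGradInner_sqrt_sqrt (hu : DifferentiableAt ℝ u p) (hv : DifferentiableAt ℝ v p)
    (hu0 : 0 < u p) (hv0 : 0 < v p) :
    hGradInner (fun q => √(u q)) (fun q => √(v q)) p =
      hGradInner u v p / (4 * √(u p) * √(v p)) := by
  rw [hGradInner_comp_left (Real.hasDerivAt_sqrt hu0.ne').differentiableAt hu,
    hGradInner_comp_right (Real.hasDerivAt_sqrt hv0.ne').differentiableAt hv,
    deriv_sqrt_of_pos hu0, deriv_sqrt_of_pos hv0]
  ring

lemma hLaplacian_sqrt (hw : HTwiceDifferentiableAt w p) (h : 0 < w p) :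
    hLaplacian (fun q => √(w q)) p =
      hLaplacian w p / (2 * √(w p)) - hGradInner w w p / (4 * √(w p) ^ 3) := by
  rw [hLaplacian_comp hw (eventually_differentiableAt_sqrt h)
    (hasDerivAt_deriv_sqrt h).differentiableAt, deriv_sqrt_of_pos h,
    (hasDerivAt_deriv_sqrt h).deriv]
  ring

end Sqrt

section Radii

variable {p : Fin 7 → ℝ}

lemma xiD_coord (i : Fin 4) (j : Fin 7) (p : Fin 7 → ℝ) :
    xiD i (fun q => q j) p = xiVF i p j := by
  simp [xiD, fderiv_apply]

lemma xiVF_add_smul_self (i : Fin 4) (p : Fin 7 → ℝ) (s : ℝ) :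
    xiVF i (p + s • xiVF i p) = xiVF i p := by
  fin_cases i <;> simp [xiVF]

lemma xiD_xiVF_self (i : Fin 4) (j : Fin 7) (p : Fin 7 → ℝ) :
    xiD i (fun q => xiVF i q j) p = 0 := by
  have h : DifferentiableAt ℝ (fun q => xiVF i q j) p :=
    differentiableAt_pi.1 (differentiable_xiVF i p) j
  simp [xiD, ← h.lineDeriv_eq_fderiv, lineDeriv, xiVF_add_smul_self]

/-- The sum of the squares of the coordinates in `S`. It encodes `‖x‖²` as `sqSum {0, 1, 2, 3}` and
`‖t‖²` as `sqSum {4, 5, 6}`, polynomials whose square roots are the two radii. -/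
def sqSum (S : Finset (Fin 7)) (p : Fin 7 → ℝ) : ℝ :=
  ∑ j ∈ S, p j ^ 2

lemma sqSum_nonneg (S : Finset (Fin 7)) (p : Fin 7 → ℝ) : 0 ≤ sqSum S p :=
  Finset.sum_nonneg fun _ _ => sq_nonneg _

lemma hTwiceDifferentiableAt_sqSum (S : Finset (Fin 7)) (p : Fin 7 → ℝ) :
    HTwiceDifferentiableAt (sqSum S) p :=
  .of_contDiffAt (by unfold sqSum; fun_prop)

lemma xiD_sqSum (i : Fin 4) (S : Finset (Fin 7)) (p : Fin 7 → ℝ) :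
    xiD i (sqSum S) p = ∑ j ∈ S, 2 * p j * xiVF i p j := by
  unfold sqSum
  rw [xiD_sum fun j _ => by fun_prop]
  refine Finset.sum_congr rfl fun j _ => ?_
  rw [xiD_comp (φ := (· ^ 2)) (by fun_prop) (by fun_prop), xiD_coord]
  simp

lemma xiD_xiD_sqSum (i : Fin 4) (S : Finset (Fin 7)) (p : Fin 7 → ℝ) :
    xiD i (xiD i (sqSum S)) p = ∑ j ∈ S, 2 * xiVF i p j ^ 2 := by
  have hξ (j : Fin 7) : DifferentiableAt ℝ (fun q => xiVF i q j) p :=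
    differentiableAt_pi.1 (differentiable_xiVF i p) j
  rw [funext (xiD_sqSum i S), xiD_sum fun j _ => by fun_prop]
  refine Finset.sum_congr rfl fun j _ => ?_
  rw [xiD_mul (by fun_prop) (hξ j), xiD_xiVF_self,
    xiD_comp (φ := (2 * ·)) (by fun_prop) (by fun_prop), xiD_coord, deriv_const_mul_id']
  ring

lemma sum_x_coords (g : Fin 7 → ℝ) : ∑ j ∈ {0, 1, 2, 3}, g j = g 0 + g 1 + g 2 + g 3 := by
  simp [add_assoc]

lemma nx_eq_sqrt_sqSum : nx = fun q => √(sqSum {0, 1, 2, 3} q) := by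
  funext q
  rw [nx, sqSum, sum_x_coords]

lemma sqSum_x_eq (p : Fin 7 → ℝ) : sqSum {0, 1, 2, 3} p = nx p ^ 2 := by
  simp [nx_eq_sqrt_sqSum, Real.sq_sqrt (sqSum_nonneg _ _)]

lemma sqSum_x_pos (hx : 0 < nx p) : 0 < sqSum {0, 1, 2, 3} p := by
  rw [sqSum_x_eq]
  positivity

lemma sum_t_coords (g : Fin 7 → ℝ) : ∑ j ∈ {4, 5, 6}, g j = g 4 + g 5 + g 6 := by
  simp [add_assoc]

lemma nt_eq_sqrt_sqSum : nt = fun q => √(sqSum {4, 5, 6} q) := by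
  funext q
  rw [nt, sqSum, sum_t_coords]

lemma sqSum_t_eq (p : Fin 7 → ℝ) : sqSum {4, 5, 6} p = nt p ^ 2 := by
  simp [nt_eq_sqrt_sqSum, Real.sq_sqrt (sqSum_nonneg _ _)]

lemma sqSum_t_pos (ht : 0 < nt p) : 0 < sqSum {4, 5, 6} p := by
  rw [sqSum_t_eq]
  positivity

lemma hGradInner_sqSum_x (p : Fin 7 → ℝ) :
    hGradInner (sqSum {0, 1, 2, 3}) (sqSum {0, 1, 2, 3}) p = 4 * sqSum {0, 1, 2, 3} p := by
  simp only [hGradInner, xiD_sqSum, sqSum, sum_x_coords,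
    Fin.sum_univ_four, xiVF, Matrix.cons_val]
  ring

lemma hGradInner_sqSum_t (p : Fin 7 → ℝ) :
    hGradInner (sqSum {4, 5, 6}) (sqSum {4, 5, 6}) p =
      16 * sqSum {0, 1, 2, 3} p * sqSum {4, 5, 6} p := by
  simp only [hGradInner, xiD_sqSum, sqSum, sum_x_coords, sum_t_coords,
    Fin.sum_univ_four, xiVF, Matrix.cons_val]
  ring

lemma hGradInner_sqSum_t_x (p : Fin 7 → ℝ) :
    hGradInner (sqSum {4, 5, 6}) (sqSum {0, 1, 2, 3}) p = 0 := by
  simp only [hGradInner, xiD_sqSum, sum_x_coords, sum_t_coords,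
    Fin.sum_univ_four, xiVF, Matrix.cons_val]
  ring

lemma hLaplacian_sqSum_x (p : Fin 7 → ℝ) : hLaplacian (sqSum {0, 1, 2, 3}) p = 8 := by
  simp only [hLaplacian, xiD_xiD_sqSum, sum_x_coords, Fin.sum_univ_four, xiVF, Matrix.cons_val]
  norm_num

lemma hLaplacian_sqSum_t (p : Fin 7 → ℝ) :
    hLaplacian (sqSum {4, 5, 6}) p = 24 * sqSum {0, 1, 2, 3} p := by
  simp only [hLaplacian, xiD_xiD_sqSum, sqSum, sum_x_coords, sum_t_coords,
    Fin.sum_univ_four, xiVF, Matrix.cons_val]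
  ring

lemma hTwiceDifferentiableAt_nx (hx : 0 < nx p) : HTwiceDifferentiableAt nx p :=
  nx_eq_sqrt_sqSum ▸ (hTwiceDifferentiableAt_sqSum _ p).sqrt (sqSum_x_pos hx)

lemma hTwiceDifferentiableAt_nt (ht : 0 < nt p) : HTwiceDifferentiableAt nt p :=
  nt_eq_sqrt_sqSum ▸ (hTwiceDifferentiableAt_sqSum _ p).sqrt (sqSum_t_pos ht)

lemma hGradInner_nx_nx (hx : 0 < nx p) : hGradInner nx nx p = 1 := by
  have hρ := (hTwiceDifferentiableAt_sqSum {0, 1, 2, 3} p).differentiableAt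
  rw [nx_eq_sqrt_sqSum, hGradInner_sqrt_sqrt hρ hρ (sqSum_x_pos hx) (sqSum_x_pos hx),
    hGradInner_sqSum_x, sqSum_x_eq, Real.sqrt_sq hx.le]
  field_simp

lemma hGradInner_nt_nt (ht : 0 < nt p) : hGradInner nt nt p = 4 * nx p ^ 2 := by
  have hσ := (hTwiceDifferentiableAt_sqSum {4, 5, 6} p).differentiableAt
  rw [nt_eq_sqrt_sqSum, hGradInner_sqrt_sqrt hσ hσ (sqSum_t_pos ht) (sqSum_t_pos ht),
    hGradInner_sqSum_t, sqSum_x_eq, sqSum_t_eq, Real.sqrt_sq ht.le]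
  field_simp
  ring

lemma hGradInner_nt_nx (hx : 0 < nx p) (ht : 0 < nt p) : hGradInner nt nx p = 0 := by
  have hρ := (hTwiceDifferentiableAt_sqSum {0, 1, 2, 3} p).differentiableAt
  have hσ := (hTwiceDifferentiableAt_sqSum {4, 5, 6} p).differentiableAt
  rw [nx_eq_sqrt_sqSum, nt_eq_sqrt_sqSum,
    hGradInner_sqrt_sqrt hσ hρ (sqSum_t_pos ht) (sqSum_x_pos hx), hGradInner_sqSum_t_x, zero_div]

lemma hLaplacian_nx (hx : 0 < nx p) : hLaplacian nx p = 3 / nx p := by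
  nth_rw 1 [nx_eq_sqrt_sqSum]
  rw [hLaplacian_sqrt (hTwiceDifferentiableAt_sqSum _ p) (sqSum_x_pos hx), hLaplacian_sqSum_x,
    hGradInner_sqSum_x, sqSum_x_eq, Real.sqrt_sq hx.le]
  field_simp
  norm_num

lemma hLaplacian_nt (ht : 0 < nt p) : hLaplacian nt p = 8 * nx p ^ 2 / nt p := by
  nth_rw 1 [nt_eq_sqrt_sqSum]
  rw [hLaplacian_sqrt (hTwiceDifferentiableAt_sqSum _ p) (sqSum_t_pos ht), hLaplacian_sqSum_t,
    hGradInner_sqSum_t, sqSum_x_eq, sqSum_t_eq, Real.sqrt_sq ht.le]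
  field_simp
  ring

end Radii

section Rotational

variable {f : ℝ → ℝ} {p : Fin 7 → ℝ}

lemma hTwiceDifferentiableAt_nt_sub_comp_nx (hx : 0 < nx p) (ht : 0 < nt p)
    (hf : ∀ᶠ r in 𝓝 (nx p), DifferentiableAt ℝ f r)
    (hf' : DifferentiableAt ℝ (deriv f) (nx p)) :
    HTwiceDifferentiableAt (fun q => nt q - f (nx q)) p :=
  (hTwiceDifferentiableAt_nt ht).sub ((hTwiceDifferentiableAt_nx hx).comp hf hf')

lemma hGradInner_nt_sub_comp_nx_nx (hx : 0 < nx p) (ht : 0 < nt p)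
    (hf : DifferentiableAt ℝ f (nx p)) :
    hGradInner (fun q => nt q - f (nx q)) nx p = -deriv f (nx p) := by
  have hnx := (hTwiceDifferentiableAt_nx hx).differentiableAt
  rw [hGradInner_sub_left (hTwiceDifferentiableAt_nt ht).differentiableAt (hf.fun_comp' p hnx),
    hGradInner_comp_left hf hnx, hGradInner_nt_nx hx ht, hGradInner_nx_nx hx]
  ring

lemma hGradNorm_nt_sub_comp_nx (hx : 0 < nx p) (ht : 0 < nt p)
    (hf : DifferentiableAt ℝ f (nx p)) :
    hGradNorm (fun q => nt q - f (nx q)) p = √(4 * nx p ^ 2 + deriv f (nx p) ^ 2) := by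
  have hnx := (hTwiceDifferentiableAt_nx hx).differentiableAt
  have hnt := (hTwiceDifferentiableAt_nt ht).differentiableAt
  rw [hGradNorm_eq_sqrt_hGradInner, hGradInner_sub_left hnt (hf.fun_comp' p hnx),
    hGradInner_comp_left hf hnx, hGradInner_comm nt, hGradInner_comm nx,
    hGradInner_sub_left hnt (hf.fun_comp' p hnx), hGradInner_nt_sub_comp_nx_nx hx ht hf,
    hGradInner_comp_left hf hnx, hGradInner_comm nx nt, hGradInner_nt_nt ht,
    hGradInner_nt_nx hx ht]
  ring_nf

lemma hLaplacian_nt_sub_comp_nx (hx : 0 < nx p) (ht : 0 < nt p)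
    (hf : ∀ᶠ r in 𝓝 (nx p), DifferentiableAt ℝ f r)
    (hf' : DifferentiableAt ℝ (deriv f) (nx p)) :
    hLaplacian (fun q => nt q - f (nx q)) p =
      8 * nx p ^ 2 / nt p - (3 * deriv f (nx p) / nx p + deriv (deriv f) (nx p)) := by
  have hnx := hTwiceDifferentiableAt_nx hx
  rw [hLaplacian_sub (hTwiceDifferentiableAt_nt ht) (hnx.comp hf hf'), hLaplacian_comp hnx hf hf',
    hLaplacian_nt ht, hLaplacian_nx hx, hGradInner_nx_nx hx]
  ring

lemma hGradNorm_nt_sub_comp_nx_eventuallyEq (hx : 0 < nx p) (ht : 0 < nt p)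
    (hf : ∀ᶠ r in 𝓝 (nx p), DifferentiableAt ℝ f r) :
    hGradNorm (fun q => nt q - f (nx q)) =ᶠ[𝓝 p]
      fun q => √(4 * nx q ^ 2 + deriv f (nx q) ^ 2) := by
  have hnx := (hTwiceDifferentiableAt_nx hx).differentiableAt.continuousAt
  have hnt := (hTwiceDifferentiableAt_nt ht).differentiableAt.continuousAt
  filter_upwards [hnx.eventually (lt_mem_nhds hx), hnt.eventually (lt_mem_nhds ht),
    hnx.eventually hf] with q hxq htq hfq
  exact hGradNorm_nt_sub_comp_nx hxq htq hfq

lemma hasDerivAt_sqrt_four_mul_sq_add_sq {g : ℝ → ℝ} {r : ℝ} (hr : r ≠ 0)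
    (hg : DifferentiableAt ℝ g r) :
    HasDerivAt (fun a => √(4 * a ^ 2 + g a ^ 2))
      ((4 * r + g r * deriv g r) / √(4 * r ^ 2 + g r ^ 2)) r := by
  have h : HasDerivAt (fun a => 4 * a ^ 2 + g a ^ 2) (8 * r + 2 * g r * deriv g r) r := by
    refine (((hasDerivAt_pow 2 r).const_mul 4).fun_add (hg.hasDerivAt.fun_pow 2)).congr_deriv ?_
    norm_num
    ring
  refine (h.sqrt (by positivity)).congr_deriv ?_
  field_simp
  ring

lemma hGradInner_hGradNorm_nt_sub_comp_nx (hx : 0 < nx p) (ht : 0 < nt p)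
    (hf : ∀ᶠ r in 𝓝 (nx p), DifferentiableAt ℝ f r)
    (hf' : DifferentiableAt ℝ (deriv f) (nx p)) :
    hGradInner (fun q => nt q - f (nx q)) (hGradNorm fun q => nt q - f (nx q)) p =
      -deriv f (nx p) * (4 * nx p + deriv f (nx p) * deriv (deriv f) (nx p)) /
        √(4 * nx p ^ 2 + deriv f (nx p) ^ 2) := by
  have hg := hasDerivAt_sqrt_four_mul_sq_add_sq hx.ne' hf'
  rw [hGradInner_congr_right (hGradNorm_nt_sub_comp_nx_eventuallyEq hx ht hf),
    hGradInner_comp_right (φ := fun a => √(4 * a ^ 2 + deriv f a ^ 2)) hg.differentiableAt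
      (hTwiceDifferentiableAt_nx hx).differentiableAt,
    hg.deriv, hGradInner_nt_sub_comp_nx_nx hx ht hf.self_of_nhds]
  ring

theorem horizontal_mean_curvature_rotational_general (hx : 0 < nx p) (ht : 0 < nt p)
    (hf : ∀ᶠ r in 𝓝 (nx p), DifferentiableAt ℝ f r)
    (hf' : DifferentiableAt ℝ (deriv f) (nx p)) :
    hMeanCurv (fun q => nt q - f (nx q)) p =
      (-4 * nx p * (2 * deriv f (nx p) + nx p * deriv (deriv f) (nx p))
          - 3 * (deriv f (nx p)) ^ 3 / nx p) /
        √(4 * nx p ^ 2 + (deriv f (nx p)) ^ 2) ^ 3 +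
      8 * nx p ^ 2 / (nt p * √(4 * nx p ^ 2 + (deriv f (nx p)) ^ 2)) := by
  have hnorm := hGradNorm_nt_sub_comp_nx hx ht hf.self_of_nhds
  have hpos : 0 < √(4 * nx p ^ 2 + deriv f (nx p) ^ 2) := by positivity
  have hsq : √(4 * nx p ^ 2 + deriv f (nx p) ^ 2) ^ 2 = 4 * nx p ^ 2 + deriv f (nx p) ^ 2 :=
    Real.sq_sqrt (by positivity)
  have hu := hTwiceDifferentiableAt_nt_sub_comp_nx hx ht hf hf'
  rw [hMeanCurv_eq_hLaplacian_sub hu.differentiableAt_xiD (hnorm ▸ hpos.ne'),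
    hLaplacian_nt_sub_comp_nx hx ht hf hf',
    hGradInner_hGradNorm_nt_sub_comp_nx hx ht hf hf', hnorm]
  generalize √(4 * nx p ^ 2 + deriv f (nx p) ^ 2) = W at hpos hsq ⊢
  field_simp
  rw [hsq]
  ring

end Rotational

/-- The horizontal mean curvature of the rotationally symmetric hypersurface
`‖t‖ = f(‖x‖)`, i.e. the zero level set of `u(x,t) = ‖t‖ − f(‖x‖)`, at a point
with `r = ‖x‖ > 0` in the domain of `f` and `‖t‖ = f(r) > 0`:
`H⁰ = (−4r(2f′ + r f″) − 3(f′)³/r)/(4r² + (f′)²)^{3/2}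
      + 8r²/(f √(4r² + (f′)²))`. -/
theorem horizontal_mean_curvature_rotational
    (s : Set ℝ) (hs : IsOpen s) (hsord : s.OrdConnected) (hsub : s ⊆ Ioi 0)
    (f : ℝ → ℝ) (hf : ContDiffOn ℝ 2 f s)
    (p : Fin 7 → ℝ) (hr : nx p ∈ s)
    (hft : nt p = f (nx p)) (hfpos : 0 < f (nx p)) :
    hMeanCurv (fun q => nt q - f (nx q)) p =
      (-4 * nx p * (2 * deriv f (nx p) + nx p * deriv (deriv f) (nx p))
          - 3 * (deriv f (nx p)) ^ 3 / nx p) /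
        Real.sqrt (4 * nx p ^ 2 + (deriv f (nx p)) ^ 2) ^ 3 +
      8 * nx p ^ 2 /
        (f (nx p) * Real.sqrt (4 * nx p ^ 2 + (deriv f (nx p)) ^ 2)) := by
  have hfs : ∀ᶠ r in 𝓝 (nx p), DifferentiableAt ℝ f r :=
    (hs.eventually_mem hr).mono fun r h =>
      (hf.differentiableOn two_ne_zero).differentiableAt (hs.mem_nhds h)
  have hf' : DifferentiableAt ℝ (deriv f) (nx p) :=
    ((hf.deriv_of_isOpen hs (m := 1) le_rfl).differentiableOn one_ne_zero).differentiableAt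
      (hs.mem_nhds hr)
  rw [← hft]
  exact horizontal_mean_curvature_rotational_general (hsub hr) (hft ▸ hfpos) hfs hf'
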